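/- Let G be a finite connected multigraph, D a divisor on G, and a a natural number. Then vol(a·D) = a·vol(D); that is, the tropical volume is homogeneous of degree one. -/

import Mathlib

/-!
The tropical volume is `vol D = max (deg D) 0`, from which homogeneity is immediate.

This follows from the estimate `|r(D) - max (deg D) 0| ≤ C` with `C` depending only on `G`,
applied to `ℓ D` and divided by `ℓ` (`tendsto_rank_div`). The upper bound on `r` is just that linear
equivalence preserves degree. The lower bound needs a constant `N` such that every divisor of degree
at least `N` is equivalent to an effective one (`exists_linSys_nonempty`). Riemann-Roch would give
the sharp constant, but finiteness of the Jacobian is enough: if `K > 0` kills the group of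
degree-zero divisors modulo principal ones (`exists_mul_mem_prin`), all coefficients except the one
at a chosen vertex can be reduced into `[0, K)`, and the last one is nonnegative once the degree is
at least `K * |V|`. Such a `K` is the absolute value of the determinant of `L + J`, where `L` is the
Laplacian and `J` the all-ones matrix; it is nonzero because a harmonic function on a connected
graph is constant.
-/


open Filter

/-- The degree of a divisor on a finite vertex set. -/
def divDeg {V : Type*} [Fintype V] (D : V → ℤ) : ℤ := ∑ v, D v

/-- A divisor is effective if all its coefficients are nonnegative. -/
def divEffective {V : Type*} (D : V → ℤ) : Prop := ∀ v, 0 ≤ D v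

/-- A finite multigraph: a symmetric edge-multiplicity function on a finite
vertex set, where `m v v` counts the loops at `v`. -/
structure Multigraph (V : Type*) [Fintype V] where
  m : V → V → ℕ
  symm : ∀ u v, m u v = m v u

namespace Multigraph

variable {V : Type*} [Fintype V] [DecidableEq V] (G : Multigraph V)

/-- Connectedness of the simple graph having an edge between distinct `u, v`
whenever `m u v > 0`. -/
def Connected : Prop :=
  (SimpleGraph.fromRel fun u v => 0 < G.m u v).Connected

/-- The valence of a vertex: each loop counts twice. -/
def val (v : V) : ℕ := 2 * G.m v v + ∑ u ∈ Finset.univ.erase v, G.m v u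

/-- The chip-firing divisor of a vertex `v`. -/
def chip (v : V) : V → ℤ := fun u =>
  if u = v then -(∑ w ∈ Finset.univ.erase v, (G.m v w : ℤ)) else (G.m v u : ℤ)

/-- The subgroup of principal divisors, generated by chip-firing divisors. -/
def prin : AddSubgroup (V → ℤ) := AddSubgroup.closure (Set.range G.chip)

/-- Linear equivalence of divisors. -/
def LinEquiv (D D' : V → ℤ) : Prop := D - D' ∈ G.prin

/-- The complete linear series of `D`: effective divisors linearly equivalent to `D`. -/
def linSys (D : V → ℤ) : Set (V → ℤ) := {E | divEffective E ∧ G.LinEquiv E D}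

open scoped Classical in
/-- The Baker–Norine rank: `-1` if `|D|` is empty, and otherwise the largest
`d ≥ 0` such that `|D - E|` is nonempty for every effective divisor `E` of
degree `d`. -/
noncomputable def rank (D : V → ℤ) : ℤ :=
  if (G.linSys D).Nonempty then
    sSup {d : ℤ | 0 ≤ d ∧ ∀ E : V → ℤ, divEffective E → divDeg E = d →
      (G.linSys (D - E)).Nonempty}
  else -1

/-- The number of edges of the multigraph. -/
def numEdges : ℕ :=
  (∑ v, G.m v v) + (∑ v, ∑ u ∈ Finset.univ.erase v, G.m v u) / 2

/-- The tropical volume of a divisor: `limsup_{ℓ → ∞} r(ℓ D)/ℓ`. -/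
noncomputable def vol (D : V → ℤ) : ℝ :=
  Filter.limsup (fun ℓ : ℕ => (G.rank (fun v => (ℓ : ℤ) * D v) : ℝ) / ℓ) Filter.atTop

end Multigraph

lemma divDeg_add {V : Type*} [Fintype V] (D E : V → ℤ) : divDeg (D + E) = divDeg D + divDeg E := by
  simp [divDeg, Finset.sum_add_distrib]

lemma divDeg_sub {V : Type*} [Fintype V] (D E : V → ℤ) : divDeg (D - E) = divDeg D - divDeg E := by
  simp [divDeg, Finset.sum_sub_distrib]

namespace Multigraph

variable {V : Type*} [Fintype V] [DecidableEq V] (G : Multigraph V)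

lemma divDeg_chip (v : V) : divDeg (G.chip v) = 0 := by
  unfold divDeg
  rw [← Finset.add_sum_erase _ _ (Finset.mem_univ v)]
  have : ∑ u ∈ Finset.univ.erase v, G.chip v u = ∑ u ∈ Finset.univ.erase v, (G.m v u : ℤ) :=
    Finset.sum_congr rfl fun u hu => by simp [chip, Finset.ne_of_mem_erase hu]
  rw [this]
  simp [chip]

lemma divDeg_of_mem_prin {D : V → ℤ} (h : D ∈ G.prin) : divDeg D = 0 := by
  induction h using AddSubgroup.closure_induction with
  | mem x hx => obtain ⟨v, rfl⟩ := hx; exact G.divDeg_chip v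
  | zero => simp [divDeg]
  | add x y _ _ hx hy => rw [divDeg_add, hx, hy, add_zero]
  | neg x _ hx => simpa [divDeg] using hx

lemma divDeg_nonneg_of_linSys {D : V → ℤ} (h : (G.linSys D).Nonempty) : 0 ≤ divDeg D := by
  obtain ⟨E, hE, hED⟩ := h
  have h1 := G.divDeg_of_mem_prin hED
  rw [divDeg_sub] at h1
  have h2 : 0 ≤ divDeg E := Finset.sum_nonneg fun v _ => hE v
  omega

/-- The Laplacian of `f`, i.e. the principal divisor obtained by firing each `v` exactly `f v`
times, in difference form. -/
lemma sum_mul_chip (f : V → ℤ) (u : V) :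
    ∑ v, f v * G.chip v u = ∑ v ∈ Finset.univ.erase u, (G.m u v : ℤ) * (f v - f u) := by
  rw [← Finset.add_sum_erase _ _ (Finset.mem_univ u)]
  have : ∑ v ∈ Finset.univ.erase u, f v * G.chip v u
      = ∑ v ∈ Finset.univ.erase u, (G.m u v : ℤ) * f v :=
    Finset.sum_congr rfl fun v hv => by
      simp [chip, (Finset.ne_of_mem_erase hv).symm, G.symm v u, mul_comm]
  rw [this]
  simp only [chip, if_true, mul_sub, Finset.sum_sub_distrib, ← Finset.sum_mul]
  ring

/-- Maximum principle: harmonic functions on a connected multigraph are constant. -/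
lemma eq_of_harmonic (hG : G.Connected) (f : V → ℤ)
    (hf : ∀ u, ∑ v, f v * G.chip v u = 0) (u v : V) : f u = f v := by
  have : Nonempty V := ⟨u⟩
  obtain ⟨w, hw⟩ := Finite.exists_max f
  have key : ∀ x, f x = f w → ∀ y, y ≠ x → 0 < G.m x y → f y = f w := by
    intro x hx y hyx hm
    have h := hf x
    rw [sum_mul_chip] at h
    have h0 := (Finset.sum_eq_zero_iff_of_nonpos (fun z _ =>
      mul_nonpos_of_nonneg_of_nonpos (Int.natCast_nonneg _)
        (by have := hw z; omega))).1 h y (Finset.mem_erase.2 ⟨hyx, Finset.mem_univ _⟩)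
    rcases mul_eq_zero.1 h0 with h1 | h1 <;> omega
  have all : ∀ x, f x = f w := by
    intro x
    obtain ⟨p⟩ := hG.preconnected x w
    induction p with
    | nil => rfl
    | @cons a b c hab _ ih =>
      have hb := ih hw key
      rw [SimpleGraph.fromRel_adj] at hab
      refine key b hb a hab.1 ?_
      rcases hab.2 with h | h
      · rwa [G.symm]
      · exact h
  rw [all u, all v]

/-- The group of degree-zero divisors modulo principal ones has finite exponent. -/
lemma exists_mul_mem_prin (hG : G.Connected) :
    ∃ K : ℤ, 0 < K ∧ ∀ D : V → ℤ, divDeg D = 0 → K • D ∈ G.prin := by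
  have : Nonempty V := hG.nonempty
  -- Laplacian plus the all-ones matrix.
  let M : Matrix V V ℤ := fun u v => G.chip v u + 1
  have hM : ∀ (y : V → ℤ) u, M.mulVec y u = ∑ v, y v * G.chip v u + divDeg y := by
    intro y u
    simp only [M, Matrix.mulVec, dotProduct, divDeg, add_mul, one_mul, Finset.sum_add_distrib]
    simp only [mul_comm]
  have hmem : ∀ y : V → ℤ, (fun u => ∑ v, y v * G.chip v u) ∈ G.prin := by
    intro y
    have : (fun u => ∑ v, y v * G.chip v u) = ∑ v, y v • G.chip v := by
      ext u; simp
    rw [this]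
    exact sum_mem fun v _ =>
      zsmul_mem (AddSubgroup.subset_closure (Set.mem_range_self v) : G.chip v ∈ G.prin) _
  -- Laplacians have degree zero, so only the all-ones part contributes to the degree.
  have hdeg : ∀ y : V → ℤ, divDeg (M.mulVec y) = 0 → divDeg y = 0 := by
    intro y hy
    have e : M.mulVec y = (fun u => ∑ v, y v * G.chip v u) + fun _ => divDeg y := funext (hM y)
    rw [e, divDeg_add, G.divDeg_of_mem_prin (hmem y), zero_add] at hy
    have hy' : (Fintype.card V : ℤ) * divDeg y = 0 := by
      rw [← hy]; conv_rhs => unfold divDeg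
      simp [divDeg]
    simpa using hy'
  have hdet : M.det ≠ 0 := by
    intro h
    obtain ⟨y, hy0, hy⟩ := Matrix.exists_mulVec_eq_zero_iff.2 h
    have hd := hdeg y (by rw [hy]; simp [divDeg])
    have hc := G.eq_of_harmonic hG y fun u => by
      have := hM y u
      rw [hy, hd] at this
      simpa using this.symm
    apply hy0
    ext u
    have h1 : (Fintype.card V : ℤ) * y u = 0 := by
      rw [← hd]; unfold divDeg
      rw [Finset.sum_congr rfl fun v _ => hc v u]
      simp
    simpa using h1
  have main : ∀ D : V → ℤ, divDeg D = 0 → M.det • D ∈ G.prin := by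
    intro D hD
    have e : M.mulVec (M.adjugate.mulVec D) = M.det • D := by
      rw [Matrix.mulVec_mulVec, Matrix.mul_adjugate, Matrix.smul_mulVec, Matrix.one_mulVec]
    have hd := hdeg _ (by
      rw [e]
      have : divDeg (M.det • D) = M.det * divDeg D := by simp [divDeg, Finset.mul_sum]
      rw [this, hD, mul_zero])
    rw [← e]
    convert hmem (M.adjugate.mulVec D) using 1
    ext u
    rw [hM, hd, add_zero]
  refine ⟨|M.det|, abs_pos.2 hdet, fun D hD => ?_⟩
  rcases abs_choice M.det with h | h <;> rw [h]
  · exact main D hD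
  · rw [neg_smul]; exact neg_mem (main D hD)

/-- Divisors of large degree are equivalent to effective ones. -/
lemma exists_linSys_nonempty (hG : G.Connected) :
    ∃ N : ℤ, 0 ≤ N ∧ ∀ D : V → ℤ, N ≤ divDeg D → (G.linSys D).Nonempty := by
  obtain ⟨v₀⟩ := hG.nonempty
  obtain ⟨K, hK, hKp⟩ := G.exists_mul_mem_prin hG
  refine ⟨Fintype.card V * K, by positivity, fun D hD => ?_⟩
  -- The correction has quotients `D v / K` away from `v₀`, and degree zero.
  let Q : V → ℤ := fun v => D v / K
  let q : V → ℤ := Q - Pi.single v₀ (divDeg Q)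
  have hq : divDeg q = 0 := by
    rw [divDeg_sub, sub_eq_zero]; simp [divDeg]
  have hpos : ∀ v, 0 ≤ D v - K * Q v := fun v => by
    have := Int.emod_nonneg (D v) hK.ne'
    rwa [Int.emod_def] at this
  refine ⟨D - K • q, fun v => ?_, ?_⟩
  · by_cases h : v = v₀
    · subst h
      have hlt : divDeg D ≤ ∑ v, (K * Q v + K) := Finset.sum_le_sum fun v _ => by
        have := Int.emod_lt_of_pos (D v) hK
        rw [Int.emod_def] at this
        change D v ≤ K * (D v / K) + K
        omega
      rw [Finset.sum_add_distrib, ← Finset.mul_sum] at hlt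
      change _ ≤ K * divDeg Q + _ at hlt
      have := hpos v
      simp only [q, Finset.sum_const, Finset.card_univ, nsmul_eq_mul, Pi.sub_apply, Pi.smul_apply,
        Pi.single_eq_same, smul_eq_mul, mul_sub] at hlt ⊢
      linarith
    · simpa [q, h] using hpos v
  · have : D - K • q - D = -(K • q) := by abel
    unfold LinEquiv
    rw [this]
    exact neg_mem (hKp q hq)

/-- The rank agrees with `max (deg D) 0` up to a constant depending only on the graph. -/
lemma exists_abs_rank_sub_le (hG : G.Connected) :
    ∃ C : ℤ, ∀ D : V → ℤ, |G.rank D - max (divDeg D) 0| ≤ C := by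
  obtain ⟨v₀⟩ := hG.nonempty
  obtain ⟨N, hN0, hN⟩ := G.exists_linSys_nonempty hG
  refine ⟨N + 1, fun D => ?_⟩
  by_cases h : (G.linSys D).Nonempty
  · have hdeg := G.divDeg_nonneg_of_linSys h
    have hr : G.rank D = sSup {d : ℤ | 0 ≤ d ∧ ∀ E : V → ℤ, divEffective E → divDeg E = d →
      (G.linSys (D - E)).Nonempty} := if_pos h
    set S := {d : ℤ | 0 ≤ d ∧ ∀ E : V → ℤ, divEffective E → divDeg E = d →
      (G.linSys (D - E)).Nonempty} with hS
    have hub : ∀ d ∈ S, d ≤ divDeg D := by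
      rintro d ⟨hd, hE⟩
      have h1 : divDeg (Pi.single v₀ d : V → ℤ) = d := by simp [divDeg]
      have h2 := G.divDeg_nonneg_of_linSys (hE (Pi.single v₀ d) (fun v => by
        by_cases hv : v = v₀
        · subst hv; simpa using hd
        · simp [hv]) h1)
      rw [divDeg_sub, h1] at h2
      omega
    have h0 : (0 : ℤ) ∈ S := by
      refine ⟨le_rfl, fun E hE hd => ?_⟩
      have : E = 0 := by
        ext v
        exact (Finset.sum_eq_zero_iff_of_nonneg fun v _ => hE v).1 hd v (Finset.mem_univ v)
      simpa [this] using h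
    have hle : G.rank D ≤ divDeg D := by rw [hr]; exact csSup_le ⟨0, h0⟩ hub
    have hge0 : 0 ≤ G.rank D := by rw [hr]; exact le_csSup ⟨_, hub⟩ h0
    have hge : divDeg D - N ≤ G.rank D := by
      by_cases hdN : N ≤ divDeg D
      · rw [hr]
        refine le_csSup ⟨_, hub⟩ ⟨by omega, fun E _ hd => hN _ ?_⟩
        rw [divDeg_sub]; omega
      · omega
    rw [max_eq_left hdeg, abs_le]
    constructor <;> omega
  · have hr : G.rank D = -1 := if_neg h
    have : divDeg D < N := by
      by_contra h'
      exact h (hN D (not_lt.1 h'))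
    rw [hr, abs_le]
    constructor <;> omega

lemma tendsto_rank_div (hG : G.Connected) (D : V → ℤ) :
    Tendsto (fun ℓ : ℕ => (G.rank (fun v => (ℓ : ℤ) * D v) : ℝ) / ℓ) atTop
      (nhds ((max (divDeg D) 0 : ℤ) : ℝ)) := by
  obtain ⟨C, hC⟩ := G.exists_abs_rank_sub_le hG
  rw [tendsto_iff_norm_sub_tendsto_zero]
  refine squeeze_zero' (Eventually.of_forall fun _ => norm_nonneg _) ?_
    (tendsto_const_div_atTop_nhds_zero_nat (C : ℝ))
  filter_upwards [eventually_gt_atTop 0] with ℓ hℓ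
  have hℓ' : (0 : ℝ) < ℓ := by exact_mod_cast hℓ
  have hd : divDeg (fun v => (ℓ : ℤ) * D v) = ℓ * divDeg D := by simp [divDeg, Finset.mul_sum]
  have h := hC (fun v => (ℓ : ℤ) * D v)
  have hm : max ((ℓ : ℤ) * divDeg D) 0 = ℓ * max (divDeg D) 0 := by
    rw [mul_max_of_nonneg _ _ (Int.natCast_nonneg ℓ), mul_zero]
  rw [hd, hm] at h
  have h' : |(G.rank (fun v => (ℓ : ℤ) * D v) : ℝ) - ℓ * ((max (divDeg D) 0 : ℤ) : ℝ)| ≤ C := by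
    exact_mod_cast h
  rw [Real.norm_eq_abs, div_sub' hℓ'.ne', abs_div, abs_of_pos hℓ']
  gcongr

lemma vol_eq (hG : G.Connected) (D : V → ℤ) : G.vol D = ((max (divDeg D) 0 : ℤ) : ℝ) :=
  (G.tendsto_rank_div hG D).limsup_eq

end Multigraph

/-- The tropical volume is homogeneous of degree one: `vol(a·D) = a·vol(D)`. -/
theorem vol_homogeneous {V : Type*} [Fintype V] [DecidableEq V]
    (G : Multigraph V) (hG : G.Connected) (D : V → ℤ) (a : ℕ) :
    G.vol (fun v => (a : ℤ) * D v) = (a : ℝ) * G.vol D := by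
  have hd : divDeg (fun v => (a : ℤ) * D v) = a * divDeg D := by simp [divDeg, Finset.mul_sum]
  have hm : max ((a : ℤ) * divDeg D) 0 = a * max (divDeg D) 0 := by
    rw [mul_max_of_nonneg _ _ (Int.natCast_nonneg a), mul_zero]
  rw [G.vol_eq hG, G.vol_eq hG, hd, hm]
  push_cast
  rfl
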